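/- Let A be a commutative ring, B an A-algebra of finite presentation, and M a B-module. Then M is intrinsically of finite presentation over A if and only if M is finitely presented as a B-module. -/

import Mathlib

/-- An `S`-module `N` is *intrinsically of finite presentation* over `R` if there exist an
`n : ℕ` and an `R`-algebra homomorphism `f : R[x₁, …, xₙ] → S` from a polynomial ring over `R`
such that `N`, viewed as an `R[x₁, …, xₙ]`-module via restriction of scalars along `f`, is
finitely presented. -/
def Module.IntrinsicallyFinitePresentation (R S N : Type*) [CommRing R] [CommRing S]
    [Algebra R S] [AddCommGroup N] [Module S N] : Prop :=
  ∃ (n : ℕ) (f : MvPolynomial (Fin n) R →ₐ[R] S),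
    letI : Module (MvPolynomial (Fin n) R) N := Module.compHom N f.toRingHom
    Module.FinitePresentation (MvPolynomial (Fin n) R) N

open TensorProduct in
theorem Module.FinitePresentation.of_restrict_aux
    (P B M : Type*) [CommRing P] [CommRing B] [Algebra P B] [Algebra.FiniteType P B]
    [AddCommGroup M] [Module B M] [Module P M] [IsScalarTower P B M]
    [Module.FinitePresentation P M] : Module.FinitePresentation B M := by
  classical
  obtain ⟨s, hs⟩ := (inferInstance : Algebra.FiniteType P B).out
  obtain ⟨t, ht⟩ := (inferInstance : Module.Finite P M).fg_top
  let g : B ⊗[P] M →ₗ[B] M := LinearMap.liftBaseChange B (LinearMap.id : M →ₗ[P] M)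
  have hg : ∀ (b : B) (m : M), g (b ⊗ₜ m) = b • m := fun b m => by simp [g]
  have hsurj : Function.Surjective g := fun m => ⟨1 ⊗ₜ m, by rw [hg, one_smul]⟩
  let d : B × M → B ⊗[P] M := fun p => p.1 ⊗ₜ p.2 - 1 ⊗ₜ (p.1 • p.2)
  let N : Submodule B (B ⊗[P] M) := Submodule.span B (((s ×ˢ t).image d : Finset _) : Set _)
  have h1 : ∀ b ∈ s, ∀ m : M, d (b, m) ∈ N := by
    intro b hb m
    have hm : m ∈ Submodule.span P (t : Set M) := by rw [ht]; trivial
    induction hm using Submodule.span_induction with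
    | mem x hx =>
      apply Submodule.subset_span
      rw [Finset.mem_coe]
      exact Finset.mem_image_of_mem d (Finset.mem_product.mpr ⟨hb, hx⟩)
    | zero => simp [d]
    | add x y _ _ hx hy =>
      have : d (b, x + y) = d (b, x) + d (b, y) := by
        simp only [d, TensorProduct.tmul_add, smul_add]; abel
      rw [this]; exact N.add_mem hx hy
    | smul a x _ hx =>
      have : d (b, a • x) = algebraMap P B a • d (b, x) := by
        simp only [d, algebraMap_smul, smul_sub, TensorProduct.tmul_smul, smul_comm b a x]
      rw [this]; exact N.smul_mem _ hx
  have h2 : ∀ b : B, ∀ m : M, d (b, m) ∈ N := by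
    intro b
    have hb : b ∈ Algebra.adjoin P (s : Set B) := by rw [hs]; trivial
    induction hb using Algebra.adjoin_induction with
    | mem x hx => exact h1 x hx
    | algebraMap r =>
      intro m
      have : d (algebraMap P B r, m) = 0 := by
        simp only [d, algebraMap_smul, TensorProduct.tmul_smul]
        rw [Algebra.algebraMap_eq_smul_one, TensorProduct.smul_tmul', sub_self]
      rw [this]; exact N.zero_mem
    | add x y _ _ hx hy =>
      intro m
      have : d (x + y, m) = d (x, m) + d (y, m) := by
        simp only [d, TensorProduct.add_tmul, add_smul, TensorProduct.tmul_add]; abel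
      rw [this]; exact N.add_mem (hx m) (hy m)
    | mul x y _ _ hx hy =>
      intro m
      have : d (x * y, m) = x • d (y, m) + d (x, y • m) := by
        simp only [d, smul_sub, TensorProduct.smul_tmul', smul_eq_mul, mul_one, mul_smul]; abel
      rw [this]; exact N.add_mem (N.smul_mem _ (hy m)) (hx _)
  have h3 : ∀ x : B ⊗[P] M, x - 1 ⊗ₜ g x ∈ N := by
    intro x
    induction x using TensorProduct.induction_on with
    | zero => simp
    | tmul b m => rw [hg]; exact h2 b m
    | add x y hx hy =>
      have : x + y - (1 : B) ⊗ₜ[P] g (x + y) = (x - 1 ⊗ₜ g x) + (y - 1 ⊗ₜ g y) := by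
        simp only [map_add, TensorProduct.tmul_add]; abel
      rw [this]; exact N.add_mem hx hy
  have hN : LinearMap.ker g = N := by
    apply le_antisymm
    · intro x hx
      have := h3 x
      rwa [LinearMap.mem_ker.mp hx, TensorProduct.tmul_zero, sub_zero] at this
    · refine Submodule.span_le.mpr fun x hx => ?_
      rw [Finset.mem_coe] at hx
      obtain ⟨p, _, rfl⟩ := Finset.mem_image.mp hx
      rw [SetLike.mem_coe, LinearMap.mem_ker]
      simp only [d, map_sub, hg, one_smul, sub_self]
  exact Module.finitePresentation_of_surjective g hsurj (hN ▸ ⟨_, rfl⟩)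

/-- Let `A` be a commutative ring, `B` an `A`-algebra of finite presentation,
and `M` a `B`-module. Then `M` is intrinsically of finite presentation over `A` if and only if
`M` is finitely presented as a `B`-module. -/
theorem Module.intrinsicallyFinitePresentation_iff_finitePresentation
    (A B M : Type*) [CommRing A] [CommRing B] [Algebra A B] [Algebra.FinitePresentation A B]
    [AddCommGroup M] [Module B M] :
    Module.IntrinsicallyFinitePresentation A B M ↔ Module.FinitePresentation B M := by
  constructor
  · rintro ⟨n, f, hf⟩
    let _ : Module (MvPolynomial (Fin n) A) M := Module.compHom M f.toRingHom
    let _ : Algebra (MvPolynomial (Fin n) A) B := f.toRingHom.toAlgebra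
    have : IsScalarTower A (MvPolynomial (Fin n) A) B :=
      IsScalarTower.of_algebraMap_eq fun x => (f.commutes x).symm
    have : IsScalarTower (MvPolynomial (Fin n) A) B M :=
      ⟨fun x y z => mul_smul (f x) y z⟩
    have : Algebra.FiniteType (MvPolynomial (Fin n) A) B :=
      Algebra.FiniteType.of_restrictScalars_finiteType A _ B
    have : Module.FinitePresentation (MvPolynomial (Fin n) A) M := hf
    exact Module.FinitePresentation.of_restrict_aux (MvPolynomial (Fin n) A) B M
  · intro h
    obtain ⟨n, f, hf, hk⟩ := (inferInstance : Algebra.FinitePresentation A B).out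
    refine ⟨n, f, ?_⟩
    let _ : Module (MvPolynomial (Fin n) A) M := Module.compHom M f.toRingHom
    let _ : Algebra (MvPolynomial (Fin n) A) B := f.toRingHom.toAlgebra
    have : IsScalarTower (MvPolynomial (Fin n) A) B M :=
      ⟨fun x y z => mul_smul (f x) y z⟩
    have : Module.FinitePresentation (MvPolynomial (Fin n) A) B :=
      Module.finitePresentation_of_surjective
        (Algebra.linearMap (MvPolynomial (Fin n) A) B) hf hk
    exact Module.FinitePresentation.trans (R := MvPolynomial (Fin n) A) (M := M) (S := B)
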